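/- arXiv:1610.03396 — 5 statements merged into one kernel-verified Lean document; each statement's English description precedes it below -/
import Mathlib

section
/- Let K be a field, let l ≥ 1, and let u_1, …, u_l be nonzero elements of K. Then the determinant of the l × l matrix whose (i,j) entry is the integer power u_i^{i−j} equals the product ∏_{1 ≤ i < j ≤ l} (1 − u_j/u_i). -/
/-!
Row `i` of the matrix is `u i ^ i` times row `i` of the Vandermonde matrix of the inverses
`(u i)⁻¹`, whose determinant is `∏_{i < j} ((u j)⁻¹ - (u i)⁻¹)`. Since
`∏_j u j ^ j = ∏_{i < j} u j`, each pair `i < j` contributes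
`u j * ((u j)⁻¹ - (u i)⁻¹) = 1 - u j / u i`.
-/

/-- Let `K` be a field, `l ≥ 1`, and `u 1, …, u l` nonzero elements of `K`.
Then `det [u i ^ (i - j)] = ∏_{i < j} (1 - u j / u i)`, where the matrix entry
is the integer power (zpow) of the nonzero field element `u i`. -/
theorem det_zpow_sub_eq_prod {K : Type*} [Field K] (l : ℕ) (hl : 1 ≤ l)
    (u : Fin l → K) (hu : ∀ i, u i ≠ 0) :
    Matrix.det (Matrix.of fun i j : Fin l => u i ^ (((i : ℕ) : ℤ) - ((j : ℕ) : ℤ))) =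
      ∏ i : Fin l, ∏ j ∈ Finset.univ.filter (fun j => i < j), (1 - u j / u i) := by
  have hM : (Matrix.of fun i j : Fin l => u i ^ (((i : ℕ) : ℤ) - ((j : ℕ) : ℤ))) =
      Matrix.of fun i j : Fin l =>
        u i ^ (i : ℕ) * Matrix.vandermonde (fun k => (u k)⁻¹) i j := by
    ext i j
    simp [Matrix.vandermonde_apply, zpow_sub₀ (hu i), div_eq_mul_inv]
  -- The index `j` has exactly `j` predecessors, so the row factors supply one `u j` per pair `i < j`.
  have hP : ∏ j : Fin l, u j ^ (j : ℕ) = ∏ i : Fin l, ∏ j ∈ Finset.Ioi i, u j := by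
    rw [Finset.prod_comm' (t' := Finset.univ) (s' := fun j => Finset.Iio j) (by simp)]
    simp
  rw [hM, Matrix.det_mul_column, Matrix.det_vandermonde, hP, ← Finset.prod_mul_distrib]
  refine Finset.prod_congr rfl fun i _ => ?_
  rw [← Finset.prod_mul_distrib]
  refine Finset.prod_congr (by ext; simp) fun j _ => ?_
  rw [mul_sub, mul_inv_cancel₀ (hu j), div_eq_mul_inv]
end

section
/- Let K be a field, let n ≥ 1, and let x_1, …, x_{2n} ∈ K satisfy x_i + x_j ≠ 0 for all 1 ≤ i < j ≤ 2n. Let S'_{2n} denote the set of permutations σ of {1, …, 2n} such that σ(2k−1) < σ(2k) for 1 ≤ k ≤ n and σ(2k−1) < σ(2k+1) for 1 ≤ k ≤ n−1. Then Σ_{σ ∈ S'_{2n}} sgn(σ) · ∏_{k=1}^{n} (x_{σ(2k−1)} − x_{σ(2k)})/(x_{σ(2k−1)} + x_{σ(2k)}) = ∏_{1 ≤ i < j ≤ 2n} (x_i − x_j)/(x_i + x_j). -/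
/-!
The evaluation is proved by induction on `n`, expanding the Pfaffian along its first row.

*Combinatorics.* A permutation in `S'` fixes the first point, so it is determined by the partner
of that point and a permutation in `S'` of the remaining points. Encoding this with `consPerm`,
whose sign is `(-1) ^ j * sign τ`, gives the row expansion `pfSum_succ`.

*Algebra.* It remains to see that `∏_{i<j} (x i - x j)/(x i + x j)` satisfies the same recursion
(`expansion_field`). With `y` listing an odd number of points, division by the product over pairs
of `y` turns this into
`∑ j, (x - y j)/(x + y j) * c j = ∏ j, (x - y j)/(x + y j)`, where
`c j = ∏_{k ≠ j} (y j + y k)/(y j - y k)`.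
Partial fractions in `x` (Lagrange interpolation at the nodes `- y j`) show that the right side is
`1 - ∑ j, 2 * y j/(x + y j) * c j`; evaluation at `x = 0` gives `∑ j, c j = 1`, and the identity
follows. This argument needs `2 ≠ 0` and distinct nonzero `y j`, whereas the theorem allows
repeated values and characteristic two. Hence the identity is cleared of denominators, proved for
the indeterminates of a polynomial ring over `ℤ`, and specialised (`expansion_ring`).
-/

open Finset

/-! ### Products over pairs -/

/-- The product of `g (y i) (y j)` over all pairs `i < j`. -/
def pairProd {R S : Type*} [CommMonoid S] (g : R → R → S) {m : ℕ} (y : Fin m → R) : S :=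
  ∏ i : Fin m, ∏ j ∈ univ.filter (fun j => i < j), g (y i) (y j)

/-- Separation of the pairs that contain the index `j` from those that avoid it. -/
theorem pairProd_succAbove {R S : Type*} [CommMonoid S] (g : R → R → S) {m : ℕ}
    (y : Fin (m + 1) → R) (j : Fin (m + 1)) :
    pairProd g y = pairProd g (fun k => y (j.succAbove k)) *
      ∏ k : Fin m, if k.castSucc < j then g (y (j.succAbove k)) (y j)
        else g (y j) (y (j.succAbove k)) := by
  simp only [pairProd, prod_filter]
  rw [Fin.prod_univ_succAbove _ j]
  simp only [Fin.prod_univ_succAbove _ j, prod_mul_distrib, lt_irrefl, if_false, one_mul,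
    Fin.succAbove_lt_succAbove_iff]
  rw [← mul_assoc, ← prod_mul_distrib, mul_comm]
  congr 1
  refine prod_congr rfl fun k _ => ?_
  simp only [Fin.succAbove_lt_iff_castSucc_lt, Fin.lt_succAbove_iff_le_castSucc]
  by_cases h : k.castSucc < j
  · simp [h, not_le.2 h]
  · simp [h, not_lt.1 h]

theorem prod_sign_below {R : Type*} [CommRing R] {m : ℕ} (j : Fin (m + 1)) :
    ∏ k : Fin m, (if k.castSucc < j then (-1 : R) else 1) = (-1) ^ (j : ℕ) := by
  simp only [Fin.lt_def, Fin.val_castSucc]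
  rw [Fin.prod_univ_eq_prod_range (fun k => if k < (j : ℕ) then (-1 : R) else 1) m, prod_ite, prod_const_one, mul_one, prod_const]
  congr 1
  have : (range m).filter (fun k => k < (j : ℕ)) = range j := by
    ext k; have := j.isLt; simp; omega
  rw [this, card_range]

theorem pairProd_sub_succAbove {R : Type*} [CommRing R] {m : ℕ}
    (y : Fin (m + 1) → R) (j : Fin (m + 1)) :
    pairProd (fun a b => a - b) y = (-1) ^ (j : ℕ) * pairProd (fun a b => a - b)
      (fun k => y (j.succAbove k)) * ∏ k : Fin m, (y j - y (j.succAbove k)) := by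
  rw [pairProd_succAbove _ y j, ← prod_sign_below j, mul_comm (∏ k : Fin m, _), mul_assoc,
    ← prod_mul_distrib]
  congr 1
  refine prod_congr rfl fun k _ => ?_
  split_ifs <;> ring

theorem pairProd_add_succAbove {R : Type*} [CommRing R] {m : ℕ}
    (y : Fin (m + 1) → R) (j : Fin (m + 1)) :
    pairProd (fun a b => a + b) y = pairProd (fun a b => a + b)
      (fun k => y (j.succAbove k)) * ∏ k : Fin m, (y j + y (j.succAbove k)) := by
  rw [pairProd_succAbove _ y j]
  congr 1
  refine prod_congr rfl fun k _ => ?_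
  split_ifs <;> ring

/-! ### The rational function identity -/

/-- Partial fraction decomposition, in `x`, of a product of an odd number of factors
`(x - y j) / (x + y j)`. -/
theorem prod_div_eq_one_sub {F : Type*} [Field F] {m : ℕ} (hm : Even m) (y : Fin (m + 1) → F)
    (hy : Function.Injective y) (x : F) (hx : ∀ j, x + y j ≠ 0) :
    ∏ j, (x - y j) / (x + y j) = 1 - ∑ j, 2 * y j / (x + y j) *
      ∏ k : Fin m, (y j + y (j.succAbove k)) / (y j - y (j.succAbove k)) := by
  classical
  -- `P` and `Q` are monic of equal degree, so `P - Q` is its own interpolant at the roots of `Q`.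
  set P : Polynomial F := Lagrange.nodal univ y
  set Q : Polynomial F := Lagrange.nodal univ (fun j => - y j)
  have hQx : Q.eval x = ∏ j, (x + y j) := by simp [Q, Lagrange.eval_nodal]
  have hPx : P.eval x = ∏ j, (x - y j) := by simp [P, Lagrange.eval_nodal]
  have hQ0 : Q.eval x ≠ 0 := by rw [hQx]; exact prod_ne_zero_iff.2 fun j _ => hx j
  have hdeg : (P - Q).degree < (univ : Finset (Fin (m + 1))).card := by
    have := Polynomial.degree_sub_lt_left (p := P) (q := Q) (by simp [P, Q, Lagrange.degree_nodal])
      (Lagrange.nodal_monic.ne_zero)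
      (by rw [Lagrange.nodal_monic.leadingCoeff, Lagrange.nodal_monic.leadingCoeff])
    rwa [Lagrange.degree_nodal] at this
  have hinj : Set.InjOn (fun j => - y j) (univ : Finset (Fin (m + 1))) :=
    fun a _ b _ h => hy (neg_injective h)
  have key := congrArg (Polynomial.eval x) (Lagrange.eq_interpolate hinj hdeg)
  rw [Lagrange.eval_interpolate_not_at_node _ (fun j _ h => hx j (by rw [h]; ring))] at key
  have hterm : ∀ j, Lagrange.nodalWeight univ (fun j => - y j) j * (x - - y j)⁻¹ *
      (P - Q).eval (- y j) = - (2 * y j / (x + y j) *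
      ∏ k : Fin m, (y j + y (j.succAbove k)) / (y j - y (j.succAbove k))) := by
    intro j
    have h1 : Q.eval (- y j) = 0 := Lagrange.eval_nodal_at_node (v := fun j => - y j) (mem_univ j)
    have h2 : P.eval (- y j) = - (2 * y j) * ∏ k : Fin m, (y j + y (j.succAbove k)) := by
      rw [Lagrange.eval_nodal, Fin.prod_univ_succAbove _ j]
      have : ∏ k : Fin m, (- y j - y (j.succAbove k)) =
          ∏ k : Fin m, (-1) * (y j + y (j.succAbove k)) :=
        prod_congr rfl fun k _ => by ring
      rw [this, prod_mul_distrib]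
      simp only [prod_const, card_univ, Fintype.card_fin, hm.neg_one_pow]
      ring
    have h3 : Lagrange.nodalWeight univ (fun j => - y j) j =
        (∏ k : Fin m, (y j - y (j.succAbove k)))⁻¹ := by
      rw [Lagrange.nodalWeight]
      have : (univ.erase j : Finset (Fin (m + 1))) = univ.map (Fin.succAboveEmb j) := by
        ext k
        simp [Fin.exists_succAbove_eq_iff]
      rw [this, prod_map, ← prod_inv_distrib]
      have : ∏ k : Fin m, (- y j - - y (j.succAbove k))⁻¹ =
          ∏ k : Fin m, (-1) * (y j - y (j.succAbove k))⁻¹ :=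
        prod_congr rfl fun k _ => by rw [← neg_sub', inv_neg]; ring
      simp only [Fin.coe_succAboveEmb]
      rw [this, prod_mul_distrib]
      simp [hm.neg_one_pow]
    rw [Polynomial.eval_sub, h1, h2, h3, prod_div_distrib]
    ring
  rw [sum_congr rfl fun j _ => hterm j, sum_neg_distrib, Polynomial.eval_sub] at key
  change _ = Q.eval x * _ at key
  rw [prod_div_distrib, ← hPx, ← hQx, div_eq_iff hQ0]
  linear_combination key

theorem sum_div_eq_prod {F : Type*} [Field F] (h2 : (2 : F) ≠ 0) {m : ℕ} (hm : Even m)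
    (y : Fin (m + 1) → F)
    (hy : Function.Injective y) (hy0 : ∀ j, y j ≠ 0) (x : F) (hx : ∀ j, x + y j ≠ 0) :
    ∑ j, (x - y j) / (x + y j) *
      ∏ k : Fin m, (y j + y (j.succAbove k)) / (y j - y (j.succAbove k)) =
    ∏ j, (x - y j) / (x + y j) := by
  have h0 := prod_div_eq_one_sub hm y hy 0 (by simpa using hy0)
  have h1 := prod_div_eq_one_sub hm y hy x hx
  set c : Fin (m + 1) → F := fun j =>
    ∏ k : Fin m, (y j + y (j.succAbove k)) / (y j - y (j.succAbove k)) with hc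
  -- Evaluation at `x = 0`, where the product is `(-1) ^ (m + 1) = -1`.
  have hs : ∑ j, c j = 1 := by
    have e1 : ∏ j, (0 - y j) / (0 + y j) = -1 := by
      have : ∀ j, (0 - y j) / (0 + y j) = -1 := fun j => by
        rw [zero_sub, zero_add, neg_div, div_self (hy0 j)]
      rw [prod_congr rfl fun j _ => this j]
      simp [hm.add_one.neg_one_pow]
    have e2 : ∑ j, 2 * y j / (0 + y j) * c j = 2 * ∑ j, c j := by
      rw [mul_sum]
      refine sum_congr rfl fun j _ => ?_
      rw [zero_add, mul_div_cancel_right₀ _ (hy0 j)]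
    rw [e1] at h0
    change _ = 1 - ∑ j, 2 * y j / (0 + y j) * c j at h0
    rw [e2] at h0
    apply mul_left_cancel₀ h2
    linear_combination h0
  rw [h1, ← hs]
  change _ = _ - ∑ j, 2 * y j / (x + y j) * c j
  rw [← sum_sub_distrib]
  refine sum_congr rfl fun j _ => ?_
  change _ * c j = _
  have := hx j
  field_simp
  ring

/-- First-row expansion of the product over pairs, cleared of denominators, for values in general
position. -/
theorem expansion_generic {F : Type*} [Field F] (h2 : (2 : F) ≠ 0) {m : ℕ} (hm : Even m)
    (y : Fin (m + 1) → F)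
    (hy : Function.Injective y) (hy0 : ∀ j, y j ≠ 0) (x : F) (hx : ∀ j, x + y j ≠ 0) :
    ∑ j : Fin (m + 1), (-1) ^ (j : ℕ) * ((x - y j) * (∏ k : Fin m, (x + y (j.succAbove k))) *
      (∏ k : Fin m, (y j + y (j.succAbove k))) *
      pairProd (fun a b => a - b) (fun k => y (j.succAbove k))) =
    (∏ j, (x - y j)) * pairProd (fun a b => a - b) y := by
  have key := sum_div_eq_prod h2 hm y hy hy0 x hx
  have hQ : ∏ j, (x + y j) ≠ 0 := prod_ne_zero_iff.2 fun j _ => hx j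
  rw [prod_div_distrib, eq_div_iff hQ] at key
  rw [← key, sum_mul, sum_mul]
  refine sum_congr rfl fun j _ => ?_
  have hd : ∏ k : Fin m, (y j - y (j.succAbove k)) ≠ 0 := prod_ne_zero_iff.2 fun k _ =>
    sub_ne_zero.2 fun h => Fin.succAbove_ne j k (hy h).symm
  rw [pairProd_sub_succAbove y j, Fin.prod_univ_succAbove _ j, prod_div_distrib]
  have := hx j
  field_simp

/-- The cleared identity is polynomial with integer coefficients, so the case of indeterminates
gives it in every commutative ring. -/
theorem expansion_ring {R : Type*} [CommRing R] {m : ℕ} (hm : Even m)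
    (y : Fin (m + 1) → R) (x : R) :
    ∑ j : Fin (m + 1), (-1) ^ (j : ℕ) * ((x - y j) * (∏ k : Fin m, (x + y (j.succAbove k))) *
      (∏ k : Fin m, (y j + y (j.succAbove k))) *
      pairProd (fun a b => a - b) (fun k => y (j.succAbove k))) =
    (∏ j, (x - y j)) * pairProd (fun a b => a - b) y := by
  let A := MvPolynomial (Option (Fin (m + 1))) ℤ
  let X : Option (Fin (m + 1)) → A := MvPolynomial.X
  have hA : ∑ j : Fin (m + 1), (-1) ^ (j : ℕ) * ((X none - X (some j)) *
      (∏ k : Fin m, (X none + X (some (j.succAbove k)))) *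
      (∏ k : Fin m, (X (some j) + X (some (j.succAbove k)))) *
      pairProd (fun a b => a - b) (fun k => X (some (j.succAbove k)))) =
      (∏ j, (X none - X (some j))) * pairProd (fun a b => a - b) (fun j => X (some j)) := by
    let F := FractionRing A
    have hinj : Function.Injective (algebraMap A F) := IsFractionRing.injective A F
    apply hinj
    have h2 : (2 : F) ≠ 0 := two_ne_zero
    have := expansion_generic h2 hm (fun j => algebraMap A F (X (some j)))
      (fun a b h => Option.some_injective _ (MvPolynomial.X_injective (hinj h)))
      (fun j h => MvPolynomial.X_ne_zero (R := ℤ) (some j)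
        (hinj (h.trans (map_zero (algebraMap A F)).symm)))
      (algebraMap A F (X none)) (fun j h => by
        rw [← map_add, ← map_zero (algebraMap A F)] at h
        have := congrArg (MvPolynomial.eval (fun _ => (1 : ℤ))) (hinj h)
        simp [X] at this)
    simpa [pairProd] using this
  have := congrArg (MvPolynomial.aeval (fun o : Option (Fin (m + 1)) => o.elim x y)) hA
  simpa [pairProd, X] using this

/-- The product `∏_{i<j} (x i - x j) / (x i + x j)` obeys the first-row expansion of the
Pfaffian. -/
theorem expansion_field {K : Type*} [Field K] {m : ℕ} (hm : Even m)
    (x : Fin (m + 2) → K) (hx : ∀ i j, i < j → x i + x j ≠ 0) :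
    ∑ j : Fin (m + 1), (-1) ^ (j : ℕ) * ((x 0 - x j.succ) / (x 0 + x j.succ) *
      pairProd (fun a b => (a - b) / (a + b)) (fun k => x (j.succAbove k).succ)) =
    pairProd (fun a b => (a - b) / (a + b)) x := by
  have hdiv : ∀ {l : ℕ} (z : Fin l → K), pairProd (fun a b => (a - b) / (a + b)) z =
      pairProd (fun a b => a - b) z / pairProd (fun a b => a + b) z := fun z => by
    simp only [pairProd, prod_div_distrib]
  have hS : ∀ {l : ℕ} (z : Fin l → K), (∀ i j, i < j → z i + z j ≠ 0) →
      pairProd (fun a b => a + b) z ≠ 0 := fun z hz =>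
    prod_ne_zero_iff.2 fun i _ => prod_ne_zero_iff.2 fun j hj => hz i j (by simpa using hj)
  have hSx := hS x hx
  have key := expansion_ring hm (fun j => x (Fin.succ j)) (x 0)
  have hsub := pairProd_sub_succAbove x 0
  have hadd := pairProd_add_succAbove x 0
  simp only [Fin.val_zero, pow_zero, one_mul, Fin.succAbove_zero] at hsub hadd
  rw [hdiv x, eq_div_iff hSx, hsub, mul_comm (pairProd _ _), ← key, sum_mul]
  refine sum_congr rfl fun j _ => ?_
  have h0 : x 0 + x j.succ ≠ 0 := hx _ _ (Fin.succ_pos j)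
  have hj : pairProd (fun a b => a + b) (fun k => x (j.succAbove k).succ) ≠ 0 :=
    hS _ fun a b hab => hx _ _ (by simpa using hab)
  rw [hdiv, hadd, pairProd_add_succAbove (fun j => x (Fin.succ j)) j,
    Fin.prod_univ_succAbove _ j]
  field_simp

/-! ### Expansion of the Pfaffian along the first row -/

/-- The permutation sending `0` to `j` and the other points to the complement of `j` in the order
prescribed by `τ`; in one-line notation, `j` followed by the shifted word of `τ`. -/
def consPerm {m : ℕ} (j : Fin (m + 1)) (τ : Equiv.Perm (Fin m)) : Equiv.Perm (Fin (m + 1)) :=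
  j.cycleRange.symm * Equiv.Perm.decomposeFin.symm (0, τ)

theorem consPerm_zero {m : ℕ} (j : Fin (m + 1)) (τ : Equiv.Perm (Fin m)) :
    consPerm j τ 0 = j := by
  simp [consPerm]

theorem consPerm_succ {m : ℕ} (j : Fin (m + 1)) (τ : Equiv.Perm (Fin m)) (k : Fin m) :
    consPerm j τ k.succ = j.succAbove (τ k) := by
  simp [consPerm]

theorem sign_consPerm {m : ℕ} (j : Fin (m + 1)) (τ : Equiv.Perm (Fin m)) :
    Equiv.Perm.sign (consPerm j τ) = (-1) ^ (j : ℕ) * Equiv.Perm.sign τ := by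
  simp [consPerm, Equiv.Perm.decomposeFin.symm_sign]

theorem consPerm_bijective (m : ℕ) :
    Function.Bijective (fun p : Fin (m + 1) × Equiv.Perm (Fin m) => consPerm p.1 p.2) := by
  constructor
  · rintro ⟨i, τ⟩ ⟨j, υ⟩ h
    have hij : i = j := by
      simpa only [consPerm_zero] using congrArg (fun σ : Equiv.Perm (Fin (m + 1)) => σ 0) h
    subst hij
    simpa [consPerm] using h
  · intro σ
    obtain ⟨⟨p, e⟩, hpe⟩ := Equiv.Perm.decomposeFin.symm.surjective ((σ 0).cycleRange * σ)
    have hp : p = 0 := by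
      simpa using congrArg (fun σ : Equiv.Perm (Fin (m + 1)) => σ 0) hpe
    subst hp
    refine ⟨(σ 0, e), ?_⟩
    simp only [consPerm, hpe]
    ext k
    simp

/-- Membership in `S'_{2n}`. The size `m = 2 * n` is a separate variable, so that the two points
removed in an expansion step can be written as `m + 2`. -/
def IsMatchingPerm (n m : ℕ) (h : m = 2 * n) (σ : Equiv.Perm (Fin m)) : Prop :=
  (∀ k : Fin n, σ ⟨2 * k, by have := k.isLt; omega⟩ < σ ⟨2 * k + 1, by have := k.isLt; omega⟩) ∧
  (∀ k : Fin n, ∀ hk : (k : ℕ) + 1 < n,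
    σ ⟨2 * k, by have := k.isLt; omega⟩ < σ ⟨2 * ((k : ℕ) + 1), by omega⟩)

open Classical in
/-- The Pfaffian of the matrix `(x i - x j) / (x i + x j)`, as a sum over `S'_{2n}`. -/
noncomputable def pfSum {K : Type*} [Field K] (n m : ℕ) (h : m = 2 * n) (x : Fin m → K) : K :=
  ∑ σ ∈ univ.filter (IsMatchingPerm n m h), ((Equiv.Perm.sign σ : ℤ) : K) *
    ∏ k : Fin n,
      (x (σ ⟨2 * k, by have := k.isLt; omega⟩) - x (σ ⟨2 * k + 1, by have := k.isLt; omega⟩)) /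
      (x (σ ⟨2 * k, by have := k.isLt; omega⟩) + x (σ ⟨2 * k + 1, by have := k.isLt; omega⟩))

/-- The values at even positions increase and each odd position exceeds the preceding even one, so
`σ 0` is the least value. -/
theorem IsMatchingPerm.apply_zero {n m : ℕ} {h : m + 1 = 2 * n} {σ : Equiv.Perm (Fin (m + 1))}
    (hσ : IsMatchingPerm n (m + 1) h σ) : σ 0 = 0 := by
  have heven : ∀ k (hk : 2 * k < m + 1), σ 0 ≤ σ ⟨2 * k, hk⟩ := by
    intro k
    induction k with
    | zero => intro hk; exact le_refl _
    | succ k ih =>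
      intro hk
      exact (ih (by omega)).trans (hσ.2 ⟨k, by omega⟩ (by simp; omega)).le
  obtain ⟨a, ha⟩ := σ.surjective 0
  have hle : σ 0 ≤ σ a := by
    obtain ⟨a, hlt⟩ := a
    rcases Nat.even_or_odd' a with ⟨k, rfl | rfl⟩
    · exact heven k hlt
    · exact (heven k (by omega)).trans (hσ.1 ⟨k, by omega⟩).le
  rw [ha] at hle
  exact le_antisymm hle (Fin.zero_le _)

theorem consPerm_two {m : ℕ} (j : Fin (m + 1)) (τ : Equiv.Perm (Fin m)) (a : ℕ) (ha : a < m)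
    (ha' : a + 2 < m + 2) :
    consPerm 0 (consPerm j τ) ⟨a + 2, ha'⟩ = (j.succAbove (τ ⟨a, ha⟩)).succ := by
  have : (⟨a + 2, ha'⟩ : Fin (m + 2)) = (Fin.succ (Fin.succ ⟨a, ha⟩)) := rfl
  rw [this, consPerm_succ, consPerm_succ, Fin.succAbove_zero]

theorem consPerm_one {m : ℕ} (j : Fin (m + 1)) (τ : Equiv.Perm (Fin m)) (h1 : 1 < m + 2) :
    consPerm 0 (consPerm j τ) ⟨1, h1⟩ = j.succ := by
  have : (⟨1, h1⟩ : Fin (m + 2)) = (Fin.succ 0) := rfl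
  rw [this, consPerm_succ, consPerm_zero, Fin.succAbove_zero]

/-- Adjoining the pair `{0, j + 1}` in front does not affect membership in `S'`. -/
theorem isMatchingPerm_consPerm {n m : ℕ} (h : m = 2 * n) (h' : m + 2 = 2 * (n + 1))
    (j : Fin (m + 1)) (τ : Equiv.Perm (Fin m)) :
    IsMatchingPerm (n + 1) (m + 2) h' (consPerm 0 (consPerm j τ)) ↔ IsMatchingPerm n m h τ := by
  constructor
  · intro hσ
    refine ⟨fun k => ?_, fun k hk => ?_⟩
    · have := hσ.1 k.succ
      simp only [Fin.val_succ, Nat.mul_add, Nat.mul_one, Nat.add_right_comm _ 2 1] at this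
      rw [consPerm_two j τ (2 * k) (by omega), consPerm_two j τ (2 * k + 1) (by omega)] at this
      simpa using this
    · have := hσ.2 k.succ (by simpa using hk)
      simp only [Fin.val_succ, Nat.mul_add, Nat.mul_one] at this
      rw [consPerm_two j τ (2 * k) (by omega), consPerm_two j τ (2 * k + 2) (by omega)] at this
      exact Fin.succAbove_lt_succAbove_iff.1 (Fin.succ_lt_succ_iff.1 this)
  · intro hτ
    refine ⟨fun k => ?_, fun k hk => ?_⟩
    · refine Fin.cases ?_ (fun k => ?_) k
      · have h0 := consPerm_zero 0 (consPerm j τ)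
        have h1 := consPerm_one j τ (by omega)
        simp only [Fin.val_zero, Nat.mul_zero, Nat.zero_add]
        rw [h1]
        erw [h0]
        exact Fin.succ_pos j
      · have := hτ.1 k
        simp only [Fin.val_succ, Nat.mul_add, Nat.mul_one, Nat.add_right_comm _ 2 1]
        rw [consPerm_two j τ (2 * k) (by omega), consPerm_two j τ (2 * k + 1) (by omega)]
        simpa using this
    · revert hk
      refine Fin.cases ?_ (fun k => ?_) k
      · intro hk
        have h0 := consPerm_zero 0 (consPerm j τ)
        simp only [Fin.val_zero, Nat.mul_zero, Nat.zero_add] at hk ⊢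
        rw [consPerm_two j τ 0 (by omega)]
        erw [h0]
        exact Fin.succ_pos _
      · intro hk
        have hk' : (k : ℕ) + 1 < n := by simpa using hk
        have := hτ.2 k hk'
        simp only [Fin.val_succ, Nat.mul_add, Nat.mul_one]
        rw [consPerm_two j τ (2 * k) (by omega), consPerm_two j τ (2 * k + 2) (by omega)]
        exact Fin.succ_lt_succ_iff.2 (Fin.succAbove_lt_succAbove_iff.2 this)

/-- First-row expansion of the Pfaffian. -/
theorem pfSum_succ {K : Type*} [Field K] {n m : ℕ} (h : m = 2 * n) (h' : m + 2 = 2 * (n + 1))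
    (x : Fin (m + 2) → K) :
    pfSum (n + 1) (m + 2) h' x =
      ∑ j : Fin (m + 1), (-1) ^ (j : ℕ) * ((x 0 - x j.succ) / (x 0 + x j.succ) *
        pfSum n m h (fun k => x (j.succAbove k).succ)) := by
  classical
  simp only [pfSum, sum_filter]
  -- Only permutations fixing `0` contribute.
  rw [← (Equiv.ofBijective _ (consPerm_bijective (m + 1))).sum_comp, Fintype.sum_prod_type,
    sum_eq_single 0]
  · rw [← (Equiv.ofBijective _ (consPerm_bijective m)).sum_comp, Fintype.sum_prod_type]
    refine sum_congr rfl fun j _ => ?_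
    rw [mul_sum, mul_sum]
    refine sum_congr rfl fun τ _ => ?_
    simp only [Equiv.ofBijective_apply, isMatchingPerm_consPerm h h']
    split_ifs
    · rw [Fin.prod_univ_succ]
      have h0 : consPerm 0 (consPerm j τ) ⟨0, by omega⟩ = 0 := consPerm_zero 0 (consPerm j τ)
      simp only [Fin.val_zero, Nat.mul_zero, Nat.zero_add, h0, consPerm_one, Fin.val_succ,
        Nat.mul_add, Nat.mul_one, Nat.add_right_comm _ 2 1]
      have e : ∀ k : Fin n, _ ∧ _ := fun k : Fin n =>
        And.intro (consPerm_two j τ (2 * k) (by omega) (by omega))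
         (consPerm_two j τ (2 * k + 1) (by omega) (by omega))
      simp only [e, sign_consPerm]
      push_cast
      simp
      ring
    · simp
  · intro i _ hi
    refine sum_eq_zero fun τ _ => if_neg fun hσ => hi ?_
    simpa only [Equiv.ofBijective_apply, consPerm_zero] using hσ.apply_zero
  · simp

theorem pfSum_eq {K : Type*} [Field K] (n m : ℕ) (h : m = 2 * n) (x : Fin m → K)
    (hx : ∀ i j, i < j → x i + x j ≠ 0) :
    pfSum n m h x = pairProd (fun a b => (a - b) / (a + b)) x := by
  induction n generalizing m with
  | zero =>
    obtain rfl : m = 0 := by omega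
    have hall : ∀ σ, IsMatchingPerm 0 0 h σ := fun σ => ⟨fun k => k.elim0, fun k => k.elim0⟩
    simp [pfSum, pairProd, hall]
  | succ n ih =>
    obtain ⟨l, rfl⟩ : ∃ l, m = l + 2 := ⟨2 * n, by omega⟩
    have hl : l = 2 * n := by omega
    rw [pfSum_succ hl h, ← expansion_field ⟨n, by omega⟩ x hx]
    refine sum_congr rfl fun j _ => ?_
    rw [ih l hl _ fun a b hab => hx _ _ (by simpa using hab)]


/-- Pfaffian evaluation: for `x 1, …, x (2n)` in a field with `x i + x j ≠ 0` for `i < j`,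
`Σ_{σ ∈ S'_{2n}} sgn σ ∏_{k=1}^{n} (x σ(2k-1) - x σ(2k))/(x σ(2k-1) + x σ(2k))
  = ∏_{i<j} (x i - x j)/(x i + x j)`,
where `S'_{2n}` consists of the permutations `σ` with `σ(2k-1) < σ(2k)` for `1 ≤ k ≤ n`
and `σ(2k-1) < σ(2k+1)` for `1 ≤ k ≤ n-1` (here written 0-indexed). -/
theorem pfaffian_eval_prod {K : Type*} [Field K] (n : ℕ) (hn : 1 ≤ n)
    (x : Fin (2 * n) → K) (hx : ∀ i j : Fin (2 * n), i < j → x i + x j ≠ 0) :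
    ∑ σ ∈ Finset.univ.filter (fun σ : Equiv.Perm (Fin (2 * n)) =>
        (∀ k : Fin n, σ ⟨2 * k, by have := k.isLt; omega⟩ < σ ⟨2 * k + 1, by have := k.isLt; omega⟩) ∧
        (∀ k : Fin n, ∀ hk : (k : ℕ) + 1 < n,
          σ ⟨2 * k, by have := k.isLt; omega⟩ < σ ⟨2 * ((k : ℕ) + 1), by omega⟩)),
      ((Equiv.Perm.sign σ : ℤ) : K) *
        ∏ k : Fin n,
          (x (σ ⟨2 * k, by have := k.isLt; omega⟩) - x (σ ⟨2 * k + 1, by have := k.isLt; omega⟩)) /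
          (x (σ ⟨2 * k, by have := k.isLt; omega⟩) + x (σ ⟨2 * k + 1, by have := k.isLt; omega⟩)) =
      ∏ i : Fin (2 * n), ∏ j ∈ Finset.univ.filter (fun j => i < j), (x i - x j) / (x i + x j) := by

  classical
  have := pfSum_eq n (2 * n) rfl x hx
  simp only [pfSum, pairProd] at this
  convert this using 3
  exact Iff.rfl
end

section
/- Let K be a field, let l ≥ 1, and let u_1, …, u_l ∈ K be such that for each i, u_i − m ≠ 0 for all integers m with 0 ≤ m ≤ i − 2. Let A be the l × l matrix whose (i,j) entry is 1/(u_i | i−j), i.e. A_{ij} = 1/(u_i (u_i − 1) ⋯ (u_i − (i−j) + 1)) when i ≥ j, and A_{ij} = (u_i + 1)(u_i + 2) ⋯ (u_i + (j−i)) when i < j. Then det(A) = (∏_{i=1}^{l} 1/(u_i (u_i − 1) ⋯ (u_i − i + 2))) · ∏_{1 ≤ i < j ≤ l} ((u_j − j) − (u_i − i)). -/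
/-!
Factor `1 / (u i (u i - 1) ⋯ (u i - i + 1))` (0-based `i`) out of row `i`. In both the cases
`j ≤ i` and `i < j`, what remains in column `j` is the single product
`(x + 1)(x + 2) ⋯ (x + j)` at `x = u i - i` (`entry_eq`). This is a monic polynomial of degree `j`
in the shifted variable `u i - i`, so the remaining determinant is the Vandermonde determinant of
these shifted variables.
-/

lemma prod_range_sub_eq {K : Type*} [Field K] (n : ℕ) (x : K) :
    ∏ m ∈ Finset.range n, (x - (m : K)) = ∏ k ∈ Finset.range n, (x - (n : K) + (k : K) + 1) := by
  rw [← Finset.prod_range_reflect]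
  refine Finset.prod_congr rfl fun k hk => ?_
  have hk' : k + 1 ≤ n := Finset.mem_range.mp hk
  rw [Nat.sub_sub, add_comm 1 k, Nat.cast_sub hk']
  push_cast
  ring

/-- Row `i` of the matrix, with `x = u i`: the common factor `1 / (x (x - 1) ⋯ (x - i + 1))` leaves
the rising product `(x - i + 1) ⋯ (x - i + j)` in column `j`. -/
lemma entry_eq {K : Type*} [Field K] (i j : ℕ) (x : K)
    (hx : ∀ m : ℕ, m < i → x - (m : K) ≠ 0) :
    (if j ≤ i then (∏ m ∈ Finset.range (i - j), (x - (m : K)))⁻¹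
      else ∏ m ∈ Finset.range (j - i), (x + (m : K) + 1)) =
    (∏ m ∈ Finset.range i, (x - (m : K)))⁻¹ *
      ∏ k ∈ Finset.range j, (x - (i : K) + (k : K) + 1) := by
  have hne : ∏ m ∈ Finset.range i, (x - (m : K)) ≠ 0 :=
    Finset.prod_ne_zero_iff.mpr fun m hm => hx m (Finset.mem_range.mp hm)
  split_ifs with h
  · obtain ⟨d, rfl⟩ := Nat.exists_eq_add_of_le h
    have hd : ∏ m ∈ Finset.range d, (x - (m : K)) ≠ 0 :=
      Finset.prod_ne_zero_iff.mpr fun m hm => hx m (by have := Finset.mem_range.mp hm; omega)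
    have key : ∏ m ∈ Finset.range (j + d), (x - (m : K)) =
        (∏ k ∈ Finset.range j, (x - ((j + d : ℕ) : K) + (k : K) + 1)) *
          ∏ m ∈ Finset.range d, (x - (m : K)) := by
      rw [prod_range_sub_eq (j + d), Finset.prod_range_add, prod_range_sub_eq d]
      congr 1
      refine Finset.prod_congr rfl fun k _ => ?_
      push_cast
      ring
    rw [Nat.add_sub_cancel_left, eq_comm, inv_mul_eq_iff_eq_mul₀ hne, key, mul_assoc,
      mul_inv_cancel₀ hd, mul_one]
  · obtain ⟨d, rfl⟩ := Nat.exists_eq_add_of_le (le_of_not_ge h)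
    rw [Nat.add_sub_cancel_left, Finset.prod_range_add, ← prod_range_sub_eq, ← mul_assoc,
      inv_mul_cancel₀ hne, one_mul]
    refine Finset.prod_congr rfl fun k _ => ?_
    push_cast
    ring

/-- Shifted Vandermonde determinant evaluation for `det [1/(u i | i - j)]`:
with `(u|k)` the generalized falling factorial power, the matrix `A` with
`A i j = 1/(u i (u i - 1) ⋯ (u i - (i-j) + 1))` for `i ≥ j` and
`A i j = (u i + 1)(u i + 2) ⋯ (u i + (j-i))` for `i < j` (indices 1-based; here 0-based)
has determinant `(∏_i 1/(u i (u i - 1) ⋯ (u i - i + 2))) ∏_{i<j} ((u j - j) - (u i - i))`. -/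
theorem det_inv_fallingFactorial {K : Type*} [Field K] (l : ℕ) (hl : 1 ≤ l)
    (u : Fin l → K) (hu : ∀ i : Fin l, ∀ m : ℕ, m < (i : ℕ) → u i - (m : K) ≠ 0) :
    Matrix.det (Matrix.of fun i j : Fin l =>
        if (j : ℕ) ≤ (i : ℕ) then (∏ m ∈ Finset.range ((i : ℕ) - (j : ℕ)), (u i - (m : K)))⁻¹
        else ∏ m ∈ Finset.range ((j : ℕ) - (i : ℕ)), (u i + (m : K) + 1)) =
      (∏ i : Fin l, (∏ m ∈ Finset.range (i : ℕ), (u i - (m : K)))⁻¹) *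
        ∏ i : Fin l, ∏ j ∈ Finset.univ.filter (fun j => i < j),
          ((u j - ((j : ℕ) : K)) - (u i - ((i : ℕ) : K))) := by
  have hA : (Matrix.of fun i j : Fin l =>
      if (j : ℕ) ≤ (i : ℕ) then (∏ m ∈ Finset.range ((i : ℕ) - (j : ℕ)), (u i - (m : K)))⁻¹
      else ∏ m ∈ Finset.range ((j : ℕ) - (i : ℕ)), (u i + (m : K) + 1)) =
      Matrix.of fun i j : Fin l => (∏ m ∈ Finset.range (i : ℕ), (u i - (m : K)))⁻¹ *
        (Matrix.of fun i j : Fin l => (∏ k ∈ Finset.range (j : ℕ),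
          (Polynomial.X + Polynomial.C ((k : K) + 1))).eval (u i - ((i : ℕ) : K))) i j := by
    ext i j
    simp only [Matrix.of_apply]
    rw [entry_eq _ _ _ (hu i), Polynomial.eval_prod]
    simp [add_assoc]
  rw [hA, Matrix.det_mul_column]
  congr 1
  rw [← Matrix.det_eval_matrixOfPolynomials_eq_det_vandermonde (fun i => u i - ((i : ℕ) : K))
      (fun j : Fin l => ∏ k ∈ Finset.range (j : ℕ),
        (Polynomial.X + Polynomial.C ((k : K) + 1))), Matrix.det_vandermonde]
  · refine Finset.prod_congr rfl fun i _ => Finset.prod_congr ?_ fun _ _ => rfl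
    ext j
    simp
  · intro j
    rw [Polynomial.natDegree_prod_of_monic _ _ fun k _ => Polynomial.monic_X_add_C _]
    simp only [Polynomial.natDegree_X_add_C, Finset.sum_const, Finset.card_range, smul_eq_mul,
      mul_one]
  · exact fun j => Polynomial.monic_prod_of_monic _ _ fun k _ => Polynomial.monic_X_add_C _
end

section
/- Let K be a field, let l ≥ 1, and let u_1, …, u_l ∈ K be such that for each i, u_i + m ≠ 0 for all integers m with 1 ≤ m ≤ i − 1. Let B be the l × l matrix whose (i,j) entry is (u_i | j−i), i.e. B_{ij} = u_i (u_i − 1) ⋯ (u_i − (j−i) + 1) when j ≥ i, and B_{ij} = 1/((u_i + 1)(u_i + 2) ⋯ (u_i + (i−j))) when j < i. Then det(B) = (∏_{i=1}^{l} 1/((u_i + 1)(u_i + 2) ⋯ (u_i + i − 1))) · ∏_{1 ≤ i < j ≤ l} ((u_j + j) − (u_i + i)). -/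
/-!
Put `v i = u i + i` (0-based indices) and `D i = (u i + 1) ⋯ (u i + i) = (v i | i)`, which is
nonzero by hypothesis. The rule `(x | a + b) = (x | a) (x - a | b)` shows that the `(i, j)` entry
of the matrix is `(D i)⁻¹ (v i | j)`. Pulling `(D i)⁻¹` out of row `i` leaves `det [(v i | j)]`,
and since `(X | j)` is a monic polynomial of degree `j`, this is the Vandermonde determinant
of `v`.
-/

namespace FallingShift

open Finset Polynomial

/-- The falling factorial polynomial `(X | k) = X (X - 1) ⋯ (X - k + 1)`. -/
noncomputable def fallPoly (K : Type*) [Field K] (k : ℕ) : K[X] :=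
  ∏ m ∈ range k, (X - C (m : K))

variable {K : Type*} [Field K]

lemma fallPoly_monic (k : ℕ) : (fallPoly K k).Monic :=
  monic_prod_of_monic _ _ fun m _ => monic_X_sub_C (m : K)

lemma fallPoly_natDegree (k : ℕ) : (fallPoly K k).natDegree = k := by
  unfold fallPoly
  rw [natDegree_prod_of_monic _ (fun m : ℕ => X - C (m : K)) fun m _ => monic_X_sub_C (m : K)]
  simp only [natDegree_X_sub_C, sum_const, card_range, smul_eq_mul, mul_one]

lemma fallPoly_eval (k : ℕ) (x : K) :
    (fallPoly K k).eval x = ∏ m ∈ range k, (x - (m : K)) := by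
  simp [fallPoly, eval_prod]

lemma fall_add (x : K) (a b : ℕ) :
    ∏ m ∈ range (a + b), (x - (m : K)) =
      (∏ m ∈ range a, (x - (m : K))) * ∏ m ∈ range b, (x - (a : K) - (m : K)) := by
  rw [prod_range_add]
  congr 1
  refine prod_congr rfl fun m _ => ?_
  push_cast
  ring

/-- The rising product `(x + 1) ⋯ (x + k)` is the falling power `(x + k | k)`. -/
lemma rise_eq_fall (x : K) (k : ℕ) :
    ∏ m ∈ range k, (x + (m : K) + 1) = ∏ m ∈ range k, (x + (k : K) - (m : K)) := by
  induction k with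
  | zero => simp
  | succ k ih =>
    rw [prod_range_succ, ih, prod_range_succ']
    congr 1
    · refine prod_congr rfl fun m _ => ?_
      push_cast
      ring
    · push_cast
      ring

/-- If `(x + 1) ⋯ (x + i) ≠ 0`, the generalized falling power `(x | j - i)` is
`(x + i | j)` divided by `(x + 1) ⋯ (x + i)`. -/
lemma entry_eq (x : K) (i j : ℕ) (h : ∏ m ∈ range i, (x + (m : K) + 1) ≠ 0) :
    (if i ≤ j then ∏ m ∈ range (j - i), (x - (m : K))
      else (∏ m ∈ range (i - j), (x + (m : K) + 1))⁻¹) =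
    (∏ m ∈ range i, (x + (m : K) + 1))⁻¹ * ∏ m ∈ range j, (x + (i : K) - (m : K)) := by
  rw [eq_inv_mul_iff_mul_eq₀ h]
  split_ifs with hij
  · obtain ⟨d, rfl⟩ := Nat.exists_eq_add_of_le hij
    rw [fall_add, rise_eq_fall, Nat.add_sub_cancel_left, add_sub_cancel_right]
  · obtain ⟨d, rfl⟩ := Nat.exists_eq_add_of_le (not_le.mp hij).le
    -- `(x + 1) ⋯ (x + j + d) = (x + j + d | j) (x + d | d)`
    have key : ∏ m ∈ range (j + d), (x + (m : K) + 1) =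
        (∏ m ∈ range j, (x + ((j + d : ℕ) : K) - (m : K))) *
          ∏ m ∈ range d, (x + (m : K) + 1) := by
      rw [rise_eq_fall, fall_add, rise_eq_fall x d]
      congr 1
      refine prod_congr rfl fun m _ => ?_
      push_cast
      ring
    rw [Nat.add_sub_cancel_left]
    rw [key] at h ⊢
    rw [mul_inv_cancel_right₀ (right_ne_zero_of_mul h)]

end FallingShift

/-- Shifted Vandermonde determinant evaluation for `det [(u i | j - i)]`:
with `(u|k)` the generalized falling factorial power, the matrix `B` with
`B i j = u i (u i - 1) ⋯ (u i - (j-i) + 1)` for `j ≥ i` and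
`B i j = 1/((u i + 1)(u i + 2) ⋯ (u i + (i-j)))` for `j < i` (indices 1-based; here 0-based)
has determinant `(∏_i 1/((u i + 1) ⋯ (u i + i - 1))) ∏_{i<j} ((u j + j) - (u i + i))`. -/
theorem det_fallingFactorial_shift {K : Type*} [Field K] (l : ℕ) (hl : 1 ≤ l)
    (u : Fin l → K) (hu : ∀ i : Fin l, ∀ m : ℕ, 1 ≤ m → m ≤ (i : ℕ) → u i + (m : K) ≠ 0) :
    Matrix.det (Matrix.of fun i j : Fin l =>
        if (i : ℕ) ≤ (j : ℕ) then ∏ m ∈ Finset.range ((j : ℕ) - (i : ℕ)), (u i - (m : K))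
        else (∏ m ∈ Finset.range ((i : ℕ) - (j : ℕ)), (u i + (m : K) + 1))⁻¹) =
      (∏ i : Fin l, (∏ m ∈ Finset.range (i : ℕ), (u i + (m : K) + 1))⁻¹) *
        ∏ i : Fin l, ∏ j ∈ Finset.univ.filter (fun j => i < j),
          ((u j + ((j : ℕ) : K)) - (u i + ((i : ℕ) : K))) := by
  have hD : ∀ i : Fin l, ∏ m ∈ Finset.range (i : ℕ), (u i + (m : K) + 1) ≠ 0 := by
    intro i
    refine Finset.prod_ne_zero_iff.mpr fun m hm => ?_
    have := hu i (m + 1) (by omega) (Finset.mem_range.mp hm)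
    push_cast at this
    rwa [← add_assoc] at this
  have hV := Matrix.det_eval_matrixOfPolynomials_eq_det_vandermonde
    (fun i : Fin l => u i + ((i : ℕ) : K)) (fun j => FallingShift.fallPoly K j)
    (fun j => FallingShift.fallPoly_natDegree _) (fun j => FallingShift.fallPoly_monic _)
  simp only [FallingShift.fallPoly_eval] at hV
  simp only [FallingShift.entry_eq _ _ _ (hD _)]
  have hR := Matrix.det_mul_column
    (fun i : Fin l => (∏ m ∈ Finset.range (i : ℕ), (u i + (m : K) + 1))⁻¹)
    (Matrix.of fun i j : Fin l =>
      ∏ m ∈ Finset.range (j : ℕ), (u i + ((i : ℕ) : K) - (m : K)))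
  simp only [Matrix.of_apply] at hR
  rw [hR, ← hV, Matrix.det_vandermonde]
  congr 1
  refine Finset.prod_congr rfl fun i _ => Finset.prod_congr ?_ fun _ _ => rfl
  ext j
  simp
end

section
/- Let K be a field, let a, k be nonnegative integers with k ≥ 1, and let u ∈ K satisfy u − m ≠ 0 for all integers m with 0 ≤ m ≤ a + k − 1. Then 1/((u−a)(u−a−1)⋯(u−a−k+1)) = Σ_{i=0}^{a} C(a,i) · k(k+1)⋯(k+i−1) / (u(u−1)⋯(u−k−i+1)); that is, 1/((u−a)|k) = Σ_{i=0}^{a} C(a,i) · ((k+i−1)|i) / (u|k+i). -/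
/-!
Write `F a k = 1/((u-a)|k)`. Applying the one-step shift `1/((v-1)|k) = 1/(v|k) + k/(v|k+1)`
at `v = u - a` gives `F (a+1) k = F a k + k * F a (k+1)`, so the identity follows by induction on
`a` for all `k` simultaneously: the coefficients `C(a,i) * k(k+1)⋯(k+i-1)` satisfy the matching
recursion by Pascal's rule together with `k * (k+1)⋯(k+i) = k(k+1)⋯(k+i)`.
-/

lemma inv_fallingFactorial_shift_one {K : Type*} [Field K] (v : K) (k : ℕ)
    (h : ∀ m : ℕ, m ≤ k → v - (m : K) ≠ 0) :
    (∏ m ∈ Finset.range k, (v - 1 - (m : K)))⁻¹ =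
      (∏ m ∈ Finset.range k, (v - (m : K)))⁻¹ +
        (k : K) * (∏ m ∈ Finset.range (k + 1), (v - (m : K)))⁻¹ := by
  have hv : v ≠ 0 := by simpa using h 0 (Nat.zero_le k)
  have hvk : v - (k : K) ≠ 0 := h k le_rfl
  have hP : ∏ m ∈ Finset.range k, (v - (m : K)) ≠ 0 :=
    Finset.prod_ne_zero_iff.2 fun m hm => h m (Finset.mem_range.1 hm).le
  -- Peeling the first, respectively the last, factor off `(v|k+1)`.
  have key : (∏ m ∈ Finset.range k, (v - 1 - (m : K))) * v =
      (∏ m ∈ Finset.range k, (v - (m : K))) * (v - k) := by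
    rw [← Finset.prod_range_succ, Finset.prod_range_succ']
    simp only [Nat.cast_add, Nat.cast_one, Nat.cast_zero, sub_zero]
    congr 1
    exact Finset.prod_congr rfl fun m _ => by ring
  rw [Finset.prod_range_succ]
  rw [← eq_div_iff hv] at key
  rw [key]
  field_simp
  ring

/-- The expansion with the rising factorial in the form `Nat.ascFactorial`; it also holds
for `k = 0`. -/
lemma inv_fallingFactorial_shift_asc {K : Type*} [Field K] (u : K) (a : ℕ) :
    ∀ k : ℕ, (∀ m : ℕ, m < a + k → u - (m : K) ≠ 0) →
    (∏ m ∈ Finset.range k, (u - (a : K) - (m : K)))⁻¹ =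
      ∑ i ∈ Finset.range (a + 1),
        ((a.choose i * k.ascFactorial i : ℕ) : K) *
          (∏ m ∈ Finset.range (k + i), (u - (m : K)))⁻¹ := by
  induction a with
  | zero => intro k _; simp
  | succ a ih =>
    intro k h
    have hstep := inv_fallingFactorial_shift_one (u - (a : K)) k fun m hm => by
      have := h (a + m) (by omega)
      rwa [Nat.cast_add, ← sub_sub] at this
    have hasc : ∀ i : ℕ, k.ascFactorial (i + 1) = k * (k + 1).ascFactorial i := fun i => by
      rw [Nat.ascFactorial_succ, ← Nat.succ_ascFactorial]
    rw [Nat.cast_succ, ← sub_sub, hstep, ih k fun m hm => h m (by omega),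
      ih (k + 1) fun m hm => h m (by omega), Finset.sum_range_succ' _ (a + 1)]
    -- The term `i = a + 1` may be added to the first sum, as `C(a, a+1) = 0`.
    have hext : ∑ i ∈ Finset.range (a + 1), ((a.choose i * k.ascFactorial i : ℕ) : K) *
          (∏ m ∈ Finset.range (k + i), (u - (m : K)))⁻¹ =
        ∑ i ∈ Finset.range (a + 1 + 1), ((a.choose i * k.ascFactorial i : ℕ) : K) *
          (∏ m ∈ Finset.range (k + i), (u - (m : K)))⁻¹ := by
      rw [Finset.sum_range_succ _ (a + 1)]
      simp
    rw [hext, Finset.sum_range_succ' _ (a + 1), Finset.mul_sum, add_right_comm,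
      ← Finset.sum_add_distrib]
    congr 1
    · refine Finset.sum_congr rfl fun i _ => ?_
      rw [Nat.choose_succ_succ', hasc, show k + 1 + i = k + (i + 1) by ring]
      push_cast
      ring
    · simp


/-- Iterated shift identity for falling factorial powers: for `u` in a field,
`a ≥ 0`, `k ≥ 1`, with `u - m ≠ 0` for `0 ≤ m ≤ a + k - 1`,
`1/((u-a)|k) = Σ_{i=0}^{a} C(a,i) ((k+i-1)|i) / (u|k+i)`, where
`((k+i-1)|i) = k(k+1)⋯(k+i-1)`. -/
theorem inv_fallingFactorial_shift_expansion {K : Type*} [Field K] (u : K) (a k : ℕ)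
    (hk : 1 ≤ k) (h : ∀ m : ℕ, m ≤ a + k - 1 → u - (m : K) ≠ 0) :
    (∏ m ∈ Finset.range k, (u - (a : K) - (m : K)))⁻¹ =
      ∑ i ∈ Finset.range (a + 1),
        ((a.choose i * (k + i - 1).descFactorial i : ℕ) : K) *
          (∏ m ∈ Finset.range (k + i), (u - (m : K)))⁻¹ := by
  simpa only [Nat.add_descFactorial_eq_ascFactorial'] using
    inv_fallingFactorial_shift_asc u a k fun m hm => h m (by omega)
end
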